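/- Let H²_β be a weighted Hardy space of polynomial growth, and let B be a finite Blaschke product of order m on 𝔻. Then the multiplication operator M_B on H²_β is similar to the direct sum of m copies of M_z acting on the direct sum of m copies of H²_β. -/

import Mathlib

noncomputable section

open Complex Filter Topology

/-- The sequence-space (ℓ²) model of a weighted Hardy space `H²_β`.
An element `a : H2` represents the analytic function whose `k`-th Taylor
coefficient is `a k / β k` (so that `‖a‖` is exactly the `H²_β`-norm). -/
abbrev H2 : Type := lp (fun _ : ℕ => ℂ) 2

/-- The direct sum (ℓ²-sense) of `m` copies of `H2`. -/
abbrev Hm (m : ℕ) : Type := PiLp 2 (fun _ : Fin m => H2)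

/-- The open unit disk 𝔻 ⊆ ℂ. -/
def unitDisk : Set ℂ := Metric.ball 0 1

/-- `β_0 = 1` and `β_k = ∏_{j=1}^k w_j`. -/
def betaSeq (w : ℕ → ℝ) (k : ℕ) : ℝ := ∏ j ∈ Finset.Icc 1 k, w j

/-- The analytic function on 𝔻 represented by the vector `a` in the model of `H²_β`:
`f(z) = ∑_k (a k / β k) z^k`. -/
def repFun (β : ℕ → ℝ) (a : H2) (z : ℂ) : ℂ := ∑' k, (a k / (β k : ℂ)) * z ^ k

/-- `T` is (the ℓ²-model of) the multiplication operator `M_g` on `H²_β`.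
Existence of such a `T` says precisely that `M_g` is bounded on `H²_β`. -/
def RepMul (β : ℕ → ℝ) (g : ℂ → ℂ) (T : H2 →L[ℂ] H2) : Prop :=
  ∀ a : H2, ∀ z ∈ unitDisk, repFun β (T a) z = g z * repFun β a z

/-- `T` is (the ℓ²-model of) the composition operator `C_ψ` on `H²_β`.
Existence of such a `T` says precisely that `C_ψ` is bounded on `H²_β`. -/
def RepComp (β : ℕ → ℝ) (ψ : ℂ → ℂ) (T : H2 →L[ℂ] H2) : Prop :=
  ∀ a : H2, ∀ z ∈ unitDisk, repFun β (T a) z = repFun β a (ψ z)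

/-- The Möbius factor `φ_{z₀}(z) = (z₀ - z)/(1 - conj z₀ · z)`. -/
def mobius (z₀ z : ℂ) : ℂ := (z₀ - z) / (1 - (starRingEnd ℂ) z₀ * z)

/-- `φ` belongs to `Aut(𝔻)`, i.e. `φ(z) = e^{iθ}(z₀ - z)/(1 - conj z₀ · z)`. -/
def IsDiskAut (φ : ℂ → ℂ) : Prop :=
  ∃ (θ : ℝ) (z₀ : ℂ), z₀ ∈ unitDisk ∧
    ∀ z, φ z = Complex.exp (θ * Complex.I) * mobius z₀ z

/-- `B` is a finite Blaschke product of order `m`. -/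
def IsBlaschke (m : ℕ) (B : ℂ → ℂ) : Prop :=
  ∃ (θ : ℝ) (zs : Fin m → ℂ), (∀ j, zs j ∈ unitDisk) ∧
    ∀ z, B z = Complex.exp (θ * Complex.I) * ∏ j, mobius (zs j) z

/-- `w` is a positive weight sequence tending to `1` such that the weighted Hardy
space `H²_β` is of polynomial growth: `sup_k (k+1)|w_k - 1| < ∞`. -/
def PolyGrowth (w : ℕ → ℝ) : Prop :=
  (∀ k, 1 ≤ k → 0 < w k) ∧ Tendsto w atTop (nhds 1) ∧
    ∃ M : ℝ, ∀ k : ℕ, 1 ≤ k → ((k : ℝ) + 1) * |w k - 1| ≤ M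

/-- `f` is analytic on an open neighbourhood of the closed unit disk. -/
def AnalyticOnClosedDisk (f : ℂ → ℂ) : Prop :=
  ∃ U : Set ℂ, IsOpen U ∧ Metric.closedBall (0:ℂ) 1 ⊆ U ∧ AnalyticOnNhd ℂ f U


/-- the standard basis vector -/
def dl (n : ℕ) : H2 := lp.single 2 n (1 : ℂ)

lemma dl_apply (n j : ℕ) : dl n j = if j = n then 1 else 0 := by
  unfold dl
  rw [lp.single_apply, Pi.single_apply]

lemma single_eq_smul_dl (n : ℕ) (c : ℂ) : (lp.single 2 n c : H2) = c • dl n := by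
  unfold dl
  rw [← lp.single_smul]; simp

lemma hasSum_dl (x : H2) : HasSum (fun n => x n • dl n) x := by
  have h := lp.hasSum_single (E := fun _ : ℕ => ℂ) (p := 2) (by simp) x
  simpa only [single_eq_smul_dl] using h

lemma norm_sum_dl (c : ℕ → ℂ) (s : Finset ℕ) :
    ‖∑ n ∈ s, c n • dl n‖ ^ 2 = ∑ n ∈ s, ‖c n‖ ^ 2 := by
  have h := lp.norm_sum_single (E := fun _ : ℕ => ℂ) (p := 2) (by simp) c s
  simp only [single_eq_smul_dl, ENNReal.toReal_ofNat, Real.rpow_ofNat] at h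
  exact h

lemma sum_sq_le_norm (x : H2) (s : Finset ℕ) : ∑ n ∈ s, ‖x n‖ ^ 2 ≤ ‖x‖ ^ 2 := by
  have h := lp.sum_rpow_le_norm_rpow (E := fun _ : ℕ => ℂ) (p := 2) (by simp) x s
  simpa only [ENNReal.toReal_ofNat, Real.rpow_ofNat] using h

lemma norm_le_of_sum_sq (x : H2) (C : ℝ) (hC : 0 ≤ C)
    (h : ∀ s : Finset ℕ, ∑ n ∈ s, ‖x n‖ ^ 2 ≤ C ^ 2) : ‖x‖ ≤ C := by
  refine lp.norm_le_of_forall_sum_le (p := 2) (by simp) hC ?_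
  intro s
  simpa only [ENNReal.toReal_ofNat, Real.rpow_ofNat] using h s

lemma inner_dl (x : H2) (j : ℕ) : inner ℂ (dl j) x = x j := by
  unfold dl
  rw [lp.inner_single_left]; simp

lemma clm_ext_dl {F : Type*} [NormedAddCommGroup F] [NormedSpace ℂ F] {S T : H2 →L[ℂ] F}
    (h : ∀ n, S (dl n) = T (dl n)) : S = T := by
  ext x
  have h1 := (hasSum_dl x).mapL S
  have h2 := (hasSum_dl x).mapL T
  simp only [map_smul, h] at h1 h2
  exact h1.unique h2

/-- Operator from a matrix bounded on finite vectors. -/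
lemma exists_clm_of_matrix (t : ℕ → ℕ → ℂ) (C : ℝ) (hC : 0 ≤ C)
    (h : ∀ (s r : Finset ℕ) (x : ℕ → ℂ),
      ∑ j ∈ s, ‖∑ n ∈ r, t j n * x n‖ ^ 2 ≤ C ^ 2 * ∑ n ∈ r, ‖x n‖ ^ 2) :
    ∃ T : H2 →L[ℂ] H2, ∀ j n, T (dl n) j = t j n := by
  have hcol : ∀ n, Memℓp (E := fun _ : ℕ => ℂ) (fun j => t j n) 2 := by
    intro n
    refine memℓp_gen' (C := C ^ 2) ?_
    intro s
    have := h s {n} (fun _ => 1)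
    simpa only [ENNReal.toReal_ofNat, Real.rpow_ofNat, Finset.sum_singleton, mul_one, norm_one,
      one_pow] using this
  let col : ℕ → H2 := fun n => ⟨fun j => t j n, hcol n⟩
  have hcolap : ∀ n j, col n j = t j n := fun n j => rfl
  let f : (ℕ →₀ ℂ) →ₗ[ℂ] H2 := Finsupp.linearCombination ℂ col
  let e : (ℕ →₀ ℂ) →ₗ[ℂ] H2 := Finsupp.linearCombination ℂ dl
  have hd : DenseRange e := by
    intro x
    refine mem_closure_of_tendsto (hasSum_dl x) (Eventually.of_forall fun s => ?_)
    refine ⟨∑ n ∈ s, Finsupp.single n (x n), ?_⟩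
    simp [e, map_sum, Finsupp.linearCombination_single]
  have hb : ∀ x, ‖f x‖ ≤ C * ‖e x‖ := by
    intro x
    have hex : ‖e x‖ ^ 2 = ∑ n ∈ x.support, ‖x n‖ ^ 2 := by
      rw [← norm_sum_dl]; rfl
    refine norm_le_of_sum_sq _ _ (by positivity) ?_
    intro s
    rw [mul_pow, hex]
    refine le_trans (le_of_eq ?_) (h s x.support x)
    refine Finset.sum_congr rfl fun j _ => ?_
    congr 2
    have : f x = ∑ n ∈ x.support, x n • col n := rfl
    rw [this, lp.coeFn_sum, Finset.sum_apply]
    refine Finset.sum_congr rfl fun n _ => ?_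
    rw [lp.coeFn_smul, Pi.smul_apply, hcolap, smul_eq_mul, mul_comm]
  refine ⟨f.extendOfNorm e, fun j n => ?_⟩
  have h1 := LinearMap.extendOfNorm_eq (f := f) (e := e) hd ⟨C, hb⟩ (Finsupp.single n 1)
  have h2 : e (Finsupp.single n 1) = dl n := by simp [e]
  have h3 : f (Finsupp.single n 1) = col n := by simp [f]
  rw [h2, h3] at h1
  rw [h1]

lemma entry_comp (S T : H2 →L[ℂ] H2) (j n : ℕ) :
    HasSum (fun l => T (dl n) l * S (dl l) j) (S (T (dl n)) j) := by
  have h := ((hasSum_dl (T (dl n))).mapL S).mapL (innerSL ℂ (dl j))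
  simpa [inner_dl] using h

/-- `Tt` is the conjugate of `T` by the diagonal operator `β`. -/
def WConj (β : ℕ → ℝ) (T Tt : H2 →L[ℂ] H2) : Prop :=
  ∀ j n, Tt (dl n) j = (β j : ℂ) / (β n : ℂ) * T (dl n) j

lemma WConj.comp {β : ℕ → ℝ} (hβ : ∀ n, 0 < β n) {S St T Tt : H2 →L[ℂ] H2}
    (hS : WConj β S St) (hT : WConj β T Tt) : WConj β (S ∘L T) (St ∘L Tt) := by
  intro j n
  have h1 := entry_comp St Tt j n
  have h2 := (entry_comp S T j n).mul_left ((β j : ℂ) / (β n : ℂ))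
  refine h1.unique ?_
  convert! h2 using 2 with l
  rw [hS, hT]
  have : (β l : ℂ) ≠ 0 := by exact_mod_cast (hβ l).ne'
  have : (β n : ℂ) ≠ 0 := by exact_mod_cast (hβ n).ne'
  field_simp

lemma WConj.unique {β : ℕ → ℝ} {T S S' : H2 →L[ℂ] H2}
    (h : WConj β T S) (h' : WConj β T S') : S = S' := by
  refine clm_ext_dl fun n => ?_
  ext j
  rw [h, h']

lemma WConj.one {β : ℕ → ℝ} (hβ : ∀ n, 0 < β n) :
    WConj β (ContinuousLinearMap.id ℂ H2) (ContinuousLinearMap.id ℂ H2) := by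
  intro j n
  simp only [ContinuousLinearMap.id_apply, dl_apply]
  split_ifs with h
  · subst h
    have : (β j : ℂ) ≠ 0 := by exact_mod_cast (hβ j).ne'
    field_simp
  · simp

lemma WConj.zero {β : ℕ → ℝ} : WConj β 0 0 := by
  intro j n
  simp

lemma WConj.sum {β : ℕ → ℝ} {ι : Type*} (s : Finset ι) {T Tt : ι → H2 →L[ℂ] H2}
    (h : ∀ i ∈ s, WConj β (T i) (Tt i)) : WConj β (∑ i ∈ s, T i) (∑ i ∈ s, Tt i) := by
  intro j n
  simp only [ContinuousLinearMap.sum_apply, lp.coeFn_sum, Finset.sum_apply, Finset.mul_sum]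
  exact Finset.sum_congr rfl fun i hi => h i hi j n

/-- Regularity properties of weights that we use. -/
def GoodWeight (β : ℕ → ℝ) : Prop :=
  (∀ n, 0 < β n) ∧
  (∀ K : ℕ, ∃ L : ℝ, 0 ≤ L ∧ ∀ j n : ℕ, j + 1 ≤ K * (n + 1) → n + 1 ≤ K * (j + 1) →
    β j ≤ L * β n) ∧
  (∀ σ : ℝ, 1 < σ → ∃ C : ℝ, 0 ≤ C ∧ ∀ j, β j ≤ C * σ ^ j ∧ (β j)⁻¹ ≤ C * σ ^ j)

/-- Off-diagonal exponential decay of the matrix of `A`. -/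
def FarDecay (A : H2 →L[ℂ] H2) : Prop :=
  ∃ (K : ℕ) (C ρ : ℝ), 0 ≤ C ∧ 0 < ρ ∧ ρ < 1 ∧
    ∀ j n : ℕ, (K * (n + 1) ≤ j + 1 ∨ K * (j + 1) ≤ n + 1) → ‖A (dl n) j‖ ≤ C * ρ ^ (j + n)

/-- dyadic block -/
def blk (j : ℕ) : ℕ := Nat.log 2 (j + 1)

lemma blk_le (j : ℕ) : 2 ^ blk j ≤ j + 1 := Nat.pow_log_le_self 2 (by omega)
lemma lt_blk (j : ℕ) : j + 1 < 2 ^ (blk j + 1) := Nat.lt_pow_succ_log_self (by norm_num) _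

/-- nearness of blocks -/
def nearB (N a b : ℕ) : Prop := a ≤ b + N ∧ b ≤ a + N

instance (N a b : ℕ) : Decidable (nearB N a b) := by unfold nearB; infer_instance

lemma near_part (β : ℕ → ℝ) (hβ : ∀ n, 0 < β n) (N : ℕ) (L : ℝ) (hL : 0 ≤ L)
    (hcomp : ∀ j n : ℕ, j + 1 ≤ 2 ^ (N + 1) * (n + 1) → n + 1 ≤ 2 ^ (N + 1) * (j + 1) →
      β j ≤ L * β n) (A : H2 →L[ℂ] H2) (s r : Finset ℕ) (x : ℕ → ℂ) :
    ∑ j ∈ s, ‖∑ n ∈ r, (if nearB N (blk j) (blk n) then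
      ((β j : ℂ) / (β n : ℂ) * A (dl n) j) else 0) * x n‖ ^ 2 ≤
      (2 * N + 1) * L ^ 4 * ‖A‖ ^ 2 * ∑ n ∈ r, ‖x n‖ ^ 2 := by
  classical
  let y : ℕ → H2 := fun b => ∑ n ∈ r.filter (fun n => nearB N b (blk n)), (x n / (β n : ℂ)) • dl n
  have hrow : ∀ j, ∑ n ∈ r, (if nearB N (blk j) (blk n) then
      ((β j : ℂ) / (β n : ℂ) * A (dl n) j) else 0) * x n = (β j : ℂ) * A (y (blk j)) j := by
    intro j
    simp only [y, map_sum, lp.coeFn_sum, Finset.sum_apply, Finset.mul_sum, Finset.sum_filter]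
    refine Finset.sum_congr rfl fun n _ => ?_
    split_ifs
    · rw [map_smul, lp.coeFn_smul, Pi.smul_apply, smul_eq_mul]; ring
    · simp
  have hpow : ∀ b : ℕ, 2 ^ b - 1 + 1 = 2 ^ b := fun b => Nat.sub_add_cancel Nat.one_le_two_pow
  let γ : ℕ → ℝ := fun b => β (2 ^ b - 1)
  have h1 : ∀ j, β j ≤ L * γ (blk j) := by
    intro j
    have h1 := blk_le j
    have h2 := lt_blk j
    have h3 : (2:ℕ) ^ (N + 1) = 2 * 2 ^ N := by ring
    have h4 : 1 ≤ 2 ^ N := Nat.one_le_two_pow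
    refine hcomp _ _ ?_ ?_
    · rw [hpow, h3]
      rw [pow_succ] at h2
      nlinarith
    · rw [hpow, h3]
      nlinarith
  have h2 : ∀ b n, nearB N b (blk n) → γ b ≤ L * β n := by
    intro b n ⟨ha, hb⟩
    have h1 := blk_le n
    have h2 := lt_blk n
    refine hcomp _ _ ?_ ?_
    · rw [hpow]
      calc 2 ^ b ≤ 2 ^ (N + 1 + blk n) := Nat.pow_le_pow_right (by norm_num) (by omega)
        _ = 2 ^ (N + 1) * 2 ^ blk n := pow_add _ _ _
        _ ≤ _ := Nat.mul_le_mul_left _ h1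
    · rw [hpow, ← pow_add]
      exact h2.le.trans (Nat.pow_le_pow_right (by norm_num) (by omega))
  have hy : ∀ b, ‖y b‖ ^ 2 = ∑ n ∈ r.filter (fun n => nearB N b (blk n)), ‖x n / (β n : ℂ)‖ ^ 2 :=
    fun b => norm_sum_dl _ _
  have hγ : ∀ b, 0 < γ b := fun b => hβ _
  have hyb : ∀ b, (L * γ b) ^ 2 * ‖y b‖ ^ 2 ≤
      ∑ n ∈ r, if nearB N b (blk n) then L ^ 4 * ‖x n‖ ^ 2 else 0 := by
    intro b
    rw [hy, Finset.mul_sum, ← Finset.sum_filter]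
    refine Finset.sum_le_sum fun n hn => ?_
    have hn := (Finset.mem_filter.1 hn).2
    have h3 := h2 b n hn
    have h4 : (γ b) ^ 2 ≤ L ^ 2 * (β n) ^ 2 := by
      rw [← mul_pow]; exact pow_le_pow_left₀ (hγ b).le h3 2
    have h5 : ‖x n / (β n : ℂ)‖ ^ 2 = ‖x n‖ ^ 2 / (β n) ^ 2 := by
      rw [norm_div, div_pow, Complex.norm_real, Real.norm_eq_abs, sq_abs]
    have h6 : 0 < (β n) ^ 2 := pow_pos (hβ n) 2
    rw [h5, mul_div_assoc', div_le_iff₀ h6]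
    calc (L * γ b) ^ 2 * ‖x n‖ ^ 2 = L ^ 2 * ‖x n‖ ^ 2 * (γ b) ^ 2 := by ring
      _ ≤ L ^ 2 * ‖x n‖ ^ 2 * (L ^ 2 * (β n) ^ 2) := by gcongr
      _ = _ := by ring
  have hblock : ∀ b, ∑ j ∈ s with blk j = b, ‖(β j : ℂ) * A (y (blk j)) j‖ ^ 2 ≤
      ‖A‖ ^ 2 * ((L * γ b) ^ 2 * ‖y b‖ ^ 2) := by
    intro b
    calc ∑ j ∈ s with blk j = b, ‖(β j : ℂ) * A (y (blk j)) j‖ ^ 2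
        ≤ ∑ j ∈ s with blk j = b, (L * γ b) ^ 2 * ‖A (y b) j‖ ^ 2 := by
          refine Finset.sum_le_sum fun j hj => ?_
          have hj := (Finset.mem_filter.1 hj).2
          subst hj
          rw [norm_mul, mul_pow, Complex.norm_real, Real.norm_eq_abs, sq_abs]
          have := pow_le_pow_left₀ (hβ j).le (h1 j) 2
          gcongr
      _ = (L * γ b) ^ 2 * ∑ j ∈ s with blk j = b, ‖A (y b) j‖ ^ 2 := by rw [Finset.mul_sum]
      _ ≤ (L * γ b) ^ 2 * ‖A (y b)‖ ^ 2 := by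
          gcongr; exact sum_sq_le_norm _ _
      _ ≤ (L * γ b) ^ 2 * (‖A‖ * ‖y b‖) ^ 2 := by
          gcongr; exact A.le_opNorm _
      _ = _ := by ring
  simp only [hrow]
  rw [← Finset.sum_fiberwise_of_maps_to (s := s) (t := s.image blk) (g := blk)
    (fun j hj => Finset.mem_image_of_mem _ hj)]
  calc ∑ b ∈ s.image blk, ∑ j ∈ s with blk j = b, ‖(β j : ℂ) * A (y (blk j)) j‖ ^ 2
      ≤ ∑ b ∈ s.image blk, ‖A‖ ^ 2 *
          ∑ n ∈ r, (if nearB N b (blk n) then L ^ 4 * ‖x n‖ ^ 2 else 0) := by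
        refine Finset.sum_le_sum fun b _ => (hblock b).trans ?_
        gcongr; exact hyb b
    _ = ‖A‖ ^ 2 * ∑ n ∈ r, ∑ b ∈ s.image blk,
          (if nearB N b (blk n) then L ^ 4 * ‖x n‖ ^ 2 else 0) := by
        rw [← Finset.mul_sum, Finset.sum_comm]
    _ ≤ ‖A‖ ^ 2 * ∑ n ∈ r, (2 * N + 1) * (L ^ 4 * ‖x n‖ ^ 2) := by
        gcongr with n hn
        rw [← Finset.sum_filter, Finset.sum_const, nsmul_eq_mul]
        gcongr
        have hsub : (s.image blk).filter (fun b => nearB N b (blk n)) ⊆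
            Finset.Icc (blk n - N) (blk n + N) := by
          intro b hb
          obtain ⟨h1, h2⟩ := (Finset.mem_filter.1 hb).2
          rw [Finset.mem_Icc]; omega
        have hc := Finset.card_le_card hsub
        rw [Nat.card_Icc] at hc
        have : ((s.image blk).filter (fun b => nearB N b (blk n))).card ≤ 2 * N + 1 := by omega
        exact_mod_cast this
    _ = _ := by rw [← Finset.mul_sum, ← Finset.mul_sum]; ring

lemma geom_fin (τ : ℝ) (h0 : 0 < τ) (h1 : τ < 1) (s : Finset ℕ) :
    ∑ n ∈ s, (τ ^ n) ^ 2 ≤ (1 - τ ^ 2)⁻¹ := by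
  have h2 : τ ^ 2 < 1 := by nlinarith
  have := hasSum_geometric_of_lt_one (sq_nonneg τ) h2
  have h3 := sum_le_hasSum s (fun i _ => by positivity) this
  simpa only [← pow_mul, mul_comm] using h3

lemma far_part (f : ℕ → ℕ → ℂ) (D τ : ℝ) (hD : 0 ≤ D) (h0 : 0 < τ) (h1 : τ < 1)
    (hf : ∀ j n, ‖f j n‖ ≤ D * τ ^ j * τ ^ n) (s r : Finset ℕ) (x : ℕ → ℂ) :
    ∑ j ∈ s, ‖∑ n ∈ r, f j n * x n‖ ^ 2 ≤
      (D * (1 - τ ^ 2)⁻¹) ^ 2 * ∑ n ∈ r, ‖x n‖ ^ 2 := by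
  have h2 : τ ^ 2 < 1 := by nlinarith
  have hG : 0 < (1 - τ ^ 2)⁻¹ := inv_pos.2 (by linarith)
  set G := (1 - τ ^ 2)⁻¹ with hGd
  set Z := ∑ n ∈ r, ‖x n‖ ^ 2 with hZ
  have hZ0 : 0 ≤ Z := Finset.sum_nonneg fun _ _ => by positivity
  have key : ∀ j, ‖∑ n ∈ r, f j n * x n‖ ^ 2 ≤ D ^ 2 * G * Z * (τ ^ j) ^ 2 := by
    intro j
    have a1 : ‖∑ n ∈ r, f j n * x n‖ ≤ ∑ n ∈ r, ‖f j n‖ * ‖x n‖ :=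
      (norm_sum_le _ _).trans (Finset.sum_le_sum fun n _ => (norm_mul _ _).le)
    have a2 := Finset.sum_mul_sq_le_sq_mul_sq r (fun n => ‖f j n‖) (fun n => ‖x n‖)
    have a3 : ∑ n ∈ r, ‖f j n‖ ^ 2 ≤ D ^ 2 * (τ ^ j) ^ 2 * G := by
      calc ∑ n ∈ r, ‖f j n‖ ^ 2 ≤ ∑ n ∈ r, (D * τ ^ j * τ ^ n) ^ 2 :=
            Finset.sum_le_sum fun n _ => pow_le_pow_left₀ (norm_nonneg _) (hf j n) 2
        _ = D ^ 2 * (τ ^ j) ^ 2 * ∑ n ∈ r, (τ ^ n) ^ 2 := by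
            rw [Finset.mul_sum]; exact Finset.sum_congr rfl fun n _ => by ring
        _ ≤ _ := by gcongr; exact geom_fin τ h0 h1 r
    calc ‖∑ n ∈ r, f j n * x n‖ ^ 2 ≤ (∑ n ∈ r, ‖f j n‖ * ‖x n‖) ^ 2 := by gcongr
      _ ≤ (∑ n ∈ r, ‖f j n‖ ^ 2) * Z := a2
      _ ≤ (D ^ 2 * (τ ^ j) ^ 2 * G) * Z := by gcongr
      _ = _ := by ring
  calc ∑ j ∈ s, ‖∑ n ∈ r, f j n * x n‖ ^ 2 ≤ ∑ j ∈ s, D ^ 2 * G * Z * (τ ^ j) ^ 2 :=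
        Finset.sum_le_sum fun j _ => key j
    _ = D ^ 2 * G * Z * ∑ j ∈ s, (τ ^ j) ^ 2 := by rw [← Finset.mul_sum]
    _ ≤ D ^ 2 * G * Z * G := by gcongr; exact geom_fin τ h0 h1 s
    _ = _ := by ring

lemma exists_wconj (β : ℕ → ℝ) (hβ : GoodWeight β) (A : H2 →L[ℂ] H2) (hA : FarDecay A) :
    ∃ T : H2 →L[ℂ] H2, WConj β A T := by
  obtain ⟨hpos, hcomp, hexp⟩ := hβ
  obtain ⟨K, C, ρ, hC, hρ0, hρ1, hfar⟩ := hA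
  obtain ⟨N, hN⟩ : ∃ N, K ≤ 2 ^ N := ⟨K, Nat.lt_two_pow_self.le⟩
  obtain ⟨L, hL, hLc⟩ := hcomp (2 ^ (N + 1))
  obtain ⟨τ, hτ1, hτ2⟩ := exists_between hρ1
  have hτ0 : 0 < τ := hρ0.trans hτ1
  obtain ⟨E, hE, hEb⟩ := hexp (τ / ρ) ((one_lt_div hρ0).2 hτ1)
  let t : ℕ → ℕ → ℂ := fun j n => (β j : ℂ) / (β n : ℂ) * A (dl n) j
  let t1 : ℕ → ℕ → ℂ := fun j n => if nearB N (blk j) (blk n) then t j n else 0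
  let t2 : ℕ → ℕ → ℂ := fun j n => if nearB N (blk j) (blk n) then 0 else t j n
  have ht : ∀ j n, t j n = t1 j n + t2 j n := by
    intro j n
    simp only [t1, t2]; split_ifs <;> simp
  have ht2 : ∀ j n, ‖t2 j n‖ ≤ (E ^ 2 * C) * τ ^ j * τ ^ n := by
    intro j n
    simp only [t2]
    split_ifs with h
    · rw [norm_zero]; positivity
    · have hf : K * (n + 1) ≤ j + 1 ∨ K * (j + 1) ≤ n + 1 := by
        have e1 := blk_le j
        have e2 := blk_le n
        have e3 := lt_blk j
        have e4 := lt_blk n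
        unfold nearB at h
        by_cases hc : blk j ≤ blk n + N
        · right
          have : blk j + 1 + N ≤ blk n := by omega
          calc K * (j + 1) ≤ 2 ^ N * 2 ^ (blk j + 1) := Nat.mul_le_mul hN e3.le
            _ = 2 ^ (blk j + 1 + N) := by rw [← pow_add]; congr 1; omega
            _ ≤ 2 ^ (blk n) := Nat.pow_le_pow_right (by norm_num) this
            _ ≤ _ := e2
        · left
          have : blk n + 1 + N ≤ blk j := by omega
          calc K * (n + 1) ≤ 2 ^ N * 2 ^ (blk n + 1) := Nat.mul_le_mul hN e4.le
            _ = 2 ^ (blk n + 1 + N) := by rw [← pow_add]; congr 1; omega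
            _ ≤ 2 ^ (blk j) := Nat.pow_le_pow_right (by norm_num) this
            _ ≤ _ := e1
      have h1 := hfar j n hf
      have h2 := (hEb j).1
      have h3 := (hEb n).2
      have : ‖t j n‖ = β j * (β n)⁻¹ * ‖A (dl n) j‖ := by
        simp only [t]
        rw [norm_mul, norm_div, Complex.norm_real, Complex.norm_real, Real.norm_of_nonneg (hpos j).le,
          Real.norm_of_nonneg (hpos n).le, div_eq_mul_inv]
      rw [this]
      have hn := hpos n
      calc β j * (β n)⁻¹ * ‖A (dl n) j‖
          ≤ (E * (τ / ρ) ^ j) * (E * (τ / ρ) ^ n) * (C * ρ ^ (j + n)) := by gcongr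
        _ = _ := by
          rw [div_pow, div_pow, pow_add]; field_simp
  refine exists_clm_of_matrix t (Real.sqrt (2 * ((2 * N + 1) * L ^ 4 * ‖A‖ ^ 2) +
    2 * ((E ^ 2 * C) * (1 - τ ^ 2)⁻¹) ^ 2)) (Real.sqrt_nonneg _) ?_
  intro s r x
  rw [Real.sq_sqrt (by positivity)]
  have n1 := near_part β hpos N L hL hLc A s r x
  have n2 := far_part t2 (E ^ 2 * C) τ (by positivity) hτ0 hτ2 ht2 s r x
  have n3 : ∀ j, ‖∑ n ∈ r, t j n * x n‖ ^ 2 ≤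
      2 * ‖∑ n ∈ r, t1 j n * x n‖ ^ 2 + 2 * ‖∑ n ∈ r, t2 j n * x n‖ ^ 2 := by
    intro j
    have : ∑ n ∈ r, t j n * x n = ∑ n ∈ r, t1 j n * x n + ∑ n ∈ r, t2 j n * x n := by
      rw [← Finset.sum_add_distrib]
      exact Finset.sum_congr rfl fun n _ => by rw [ht]; ring
    rw [this]
    have h := norm_add_le (∑ n ∈ r, t1 j n * x n) (∑ n ∈ r, t2 j n * x n)
    have h' := pow_le_pow_left₀ (norm_nonneg _) h 2
    nlinarith [sq_nonneg (‖∑ n ∈ r, t1 j n * x n‖ - ‖∑ n ∈ r, t2 j n * x n‖)]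
  have n4 := Finset.sum_le_sum (s := s) fun j _ => n3 j
  rw [Finset.sum_add_distrib, ← Finset.mul_sum, ← Finset.mul_sum] at n4
  have n1' : ∑ j ∈ s, ‖∑ n ∈ r, t1 j n * x n‖ ^ 2 ≤
    (2 * N + 1) * L ^ 4 * ‖A‖ ^ 2 * ∑ n ∈ r, ‖x n‖ ^ 2 := n1
  linarith

lemma FarDecay.adjoint {A : H2 →L[ℂ] H2} (hA : FarDecay A) :
    FarDecay (ContinuousLinearMap.adjoint A) := by
  obtain ⟨K, C, ρ, hC, hρ0, hρ1, hfar⟩ := hA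
  refine ⟨K, C, ρ, hC, hρ0, hρ1, fun j n h => ?_⟩
  have : ‖(ContinuousLinearMap.adjoint A) (dl n) j‖ = ‖A (dl j) n‖ := by
    rw [← inner_dl, ContinuousLinearMap.adjoint_inner_right, ← inner_dl, norm_inner_symm]
  rw [this, add_comm]
  exact hfar n j h.symm

lemma betaSeq_succ (w : ℕ → ℝ) (k : ℕ) : betaSeq w (k + 1) = betaSeq w k * w (k + 1) := by
  unfold betaSeq
  rw [Finset.prod_Icc_succ_top (by omega)]

lemma betaSeq_pos (w : ℕ → ℝ) (hw : ∀ k, 1 ≤ k → 0 < w k) (k : ℕ) : 0 < betaSeq w k :=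
  Finset.prod_pos fun j hj => hw j (Finset.mem_Icc.1 hj).1

lemma log_weight_bound (w : ℕ → ℝ) (hw : PolyGrowth w) :
    ∃ M : ℝ, 0 ≤ M ∧ ∀ k, 1 ≤ k → |Real.log (w k)| ≤ M / (k + 1) := by
  obtain ⟨hpos, hlim, M, hM⟩ := hw
  have hM0 : 0 ≤ M := le_trans (by positivity) (hM 1 le_rfl)
  obtain ⟨k0, hk0⟩ := Metric.tendsto_atTop.1 hlim (1/2) (by norm_num)
  set Q := ∑ k ∈ Finset.range k0, ((k : ℝ) + 1) * |Real.log (w k)| with hQ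
  have hQ0 : 0 ≤ Q := Finset.sum_nonneg fun _ _ => by positivity
  refine ⟨2 * M + Q, by positivity, fun k hk => ?_⟩
  have hk1 : (0:ℝ) < k + 1 := by positivity
  rw [le_div_iff₀ hk1, mul_comm]
  by_cases hkk : k < k0
  · have := Finset.single_le_sum (f := fun k : ℕ => ((k : ℝ) + 1) * |Real.log (w k)|)
      (fun i _ => by positivity) (Finset.mem_range.2 hkk)
    simp only [← hQ] at this
    linarith
  · have h1 := hk0 k (by omega)
    rw [Real.dist_eq] at h1
    have h2 := abs_lt.1 h1
    have hwk := hpos k hk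
    have h3 : |Real.log (w k)| ≤ 2 * |w k - 1| := by
      have u1 := Real.log_le_sub_one_of_pos hwk
      have u2 := Real.one_sub_inv_le_log_of_pos hwk
      rw [abs_le]
      constructor
      · have : -(2 * |w k - 1|) ≤ 1 - (w k)⁻¹ := by
          have e : 1 - (w k)⁻¹ = (w k - 1) / w k := by field_simp
          rw [e, le_div_iff₀ hwk]
          rcases abs_cases (w k - 1) with ⟨h, h'⟩ | ⟨h, h'⟩ <;> rw [h] <;> nlinarith
        linarith
      · have := le_abs_self (w k - 1)
        have := abs_nonneg (w k - 1)
        linarith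
    have h4 := hM k hk
    calc ((k:ℝ) + 1) * |Real.log (w k)| ≤ (k + 1) * (2 * |w k - 1|) := by gcongr
      _ ≤ _ := by linarith

lemma goodWeight_betaSeq (w : ℕ → ℝ) (hw : PolyGrowth w) : GoodWeight (betaSeq w) := by
  have hpos := betaSeq_pos w hw.1
  obtain ⟨M, hM0, hM⟩ := log_weight_bound w hw
  have hlog : ∀ k, Real.log (betaSeq w (k + 1)) =
      Real.log (betaSeq w k) + Real.log (w (k + 1)) := by
    intro k
    rw [betaSeq_succ, Real.log_mul (hpos k).ne' (hw.1 _ (by omega)).ne']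
  refine ⟨hpos, ?_, ?_⟩
  · intro K
    refine ⟨Real.exp (M * K), (Real.exp_pos _).le, ?_⟩
    have key : ∀ n d : ℕ, |Real.log (betaSeq w (n + d)) - Real.log (betaSeq w n)|
        ≤ M * d / (n + 1) := by
      intro n d
      induction d with
      | zero => simp
      | succ d ih =>
        rw [← add_assoc, hlog]
        have h1 := hM (n + d + 1) (by omega)
        have h2 : M / (((n + d + 1 : ℕ) : ℝ) + 1) ≤ M / (n + 1) := by
          push_cast
          gcongr
          have : (0:ℝ) ≤ d := by positivity
          linarith
        have h3 : M * ((d + 1 : ℕ) : ℝ) / (n + 1) = M * d / (n + 1) + M / (n + 1) := by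
          push_cast; ring
        rw [h3]
        rw [abs_le] at *
        constructor <;> linarith [ih.1, ih.2, h1.1, h1.2]
    have key2 : ∀ n d : ℕ, n + d + 1 ≤ K * (n + 1) →
        |Real.log (betaSeq w (n + d)) - Real.log (betaSeq w n)| ≤ M * K := by
      intro n d h
      refine (key n d).trans ?_
      rw [div_le_iff₀ (by positivity), mul_assoc]
      gcongr
      have : d ≤ K * (n + 1) := by omega
      exact_mod_cast this
    intro j n h1 h2
    rw [← Real.exp_log (hpos j), ← Real.exp_log (hpos n), ← Real.exp_add]
    apply Real.exp_le_exp.2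
    rcases le_total n j with h | h
    · obtain ⟨d, rfl⟩ := Nat.exists_eq_add_of_le h
      have := abs_le.1 (key2 n d h1)
      linarith [this.1, this.2]
    · obtain ⟨d, rfl⟩ := Nat.exists_eq_add_of_le h
      have := abs_le.1 (key2 j d h2)
      linarith [this.1, this.2]
  · intro σ hσ
    have hs : 0 < Real.log σ := Real.log_pos hσ
    set s := Real.log σ with hsd
    obtain ⟨k0, hk0⟩ := exists_nat_gt (M / s)
    have key : ∀ j : ℕ, |Real.log (betaSeq w j)| ≤ (min j k0 : ℕ) * M + j * s := by
      intro j
      induction j with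
      | zero => simp [betaSeq]
      | succ j ih =>
        rw [hlog]
        have h1 := hM (j + 1) (by omega)
        have h2 := abs_add_le (Real.log (betaSeq w j)) (Real.log (w (j + 1)))
        by_cases h : j + 1 ≤ k0
        · rw [min_eq_left h]
          rw [min_eq_left (by omega)] at ih
          have h3 : M / (((j + 1 : ℕ) : ℝ) + 1) ≤ M := by
            apply div_le_self hM0
            push_cast
            have : (0:ℝ) ≤ j := by positivity
            linarith
          push_cast at *
          nlinarith
        · rw [min_eq_right (by omega)]
          rw [min_eq_right (by omega)] at ih
          have h3 : M / (((j + 1 : ℕ) : ℝ) + 1) ≤ s := by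
            rw [div_le_iff₀ (by positivity)]
            rw [div_lt_iff₀ hs] at hk0
            have : (k0 : ℝ) ≤ ((j + 1 : ℕ) : ℝ) + 1 := by
              have : k0 ≤ j + 1 + 1 := by omega
              exact_mod_cast this
            nlinarith
          push_cast at *
          nlinarith
    refine ⟨Real.exp (k0 * M), (Real.exp_pos _).le, fun j => ?_⟩
    have hj : Real.exp (k0 * M) * σ ^ j = Real.exp (k0 * M + j * s) := by
      rw [Real.exp_add, Real.exp_nat_mul s j, hsd, Real.exp_log (by linarith)]
    have hb : |Real.log (betaSeq w j)| ≤ k0 * M + j * s := by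
      refine (key j).trans ?_
      gcongr
      exact min_le_right _ _
    rw [abs_le] at hb
    rw [hj]
    constructor
    · rw [← Real.exp_log (hpos j)]
      exact Real.exp_le_exp.2 hb.2
    · rw [← Real.exp_log (inv_pos.2 (hpos j)), Real.log_inv]
      exact Real.exp_le_exp.2 (by linarith [hb.1])

lemma unitDisk_iff (z : ℂ) : z ∈ unitDisk ↔ ‖z‖ < 1 := by
  unfold unitDisk; rw [mem_ball_zero_iff]

lemma memlp_pow_div (β : ℕ → ℝ) (hβ : GoodWeight β) (z : ℂ) (hz : z ∈ unitDisk) :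
    Memℓp (E := fun _ : ℕ => ℂ) (fun n => (starRingEnd ℂ) (z ^ n / (β n : ℂ))) 2 := by
  rw [unitDisk_iff] at hz
  have hz0 := norm_nonneg z
  obtain ⟨hpos, -, hexp⟩ := hβ
  obtain ⟨C, hC, hb⟩ := hexp (2 / (1 + ‖z‖)) (by rw [lt_div_iff₀ (by positivity)]; linarith)
  set q := 2 / (1 + ‖z‖) * ‖z‖ with hq
  have hq0 : 0 ≤ q := by positivity
  have hq1 : q < 1 := by
    rw [hq, div_mul_eq_mul_div, div_lt_one (by positivity)]; linarith
  apply memℓp_gen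
  simp only [ENNReal.toReal_ofNat, Real.rpow_ofNat, RCLike.norm_conj]
  refine Summable.of_nonneg_of_le (fun n => by positivity) (f := fun n => C ^ 2 * (q ^ 2) ^ n) ?_ ?_
  · intro n
    have h1 : ‖z ^ n / (β n : ℂ)‖ ≤ C * q ^ n := by
      rw [norm_div, norm_pow, Complex.norm_real, Real.norm_of_nonneg (hpos n).le, div_eq_mul_inv]
      calc ‖z‖ ^ n * (β n)⁻¹ ≤ ‖z‖ ^ n * (C * (2 / (1 + ‖z‖)) ^ n) := by gcongr; exact (hb n).2
        _ = _ := by rw [hq, mul_pow]; ring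
    calc ‖z ^ n / (β n : ℂ)‖ ^ 2 ≤ (C * q ^ n) ^ 2 := by gcongr
      _ = _ := by ring
  · exact (summable_geometric_of_lt_one (by positivity) (by nlinarith)).mul_left _

/-- representing vector of the evaluation functional -/
lemma exists_kernel (β : ℕ → ℝ) (hβ : GoodWeight β) (z : ℂ) (hz : z ∈ unitDisk) :
    ∃ k : H2, (∀ n, k n = (starRingEnd ℂ) (z ^ n / (β n : ℂ))) ∧
      ∀ a : H2, HasSum (fun n => a n / (β n : ℂ) * z ^ n) (inner ℂ k a) ∧
        repFun β a z = inner ℂ k a := by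
  refine ⟨⟨_, memlp_pow_div β hβ z hz⟩, fun n => rfl, fun a => ?_⟩
  have h := lp.hasSum_inner (𝕜 := ℂ) (⟨_, memlp_pow_div β hβ z hz⟩ : H2) a
  have h' : HasSum (fun n => a n / (β n : ℂ) * z ^ n)
      (inner ℂ (⟨_, memlp_pow_div β hβ z hz⟩ : H2) a) := by
    convert! h using 2 with n
    change _ = inner ℂ ((starRingEnd ℂ) (z ^ n / (β n : ℂ))) (a n)
    rw [RCLike.inner_apply, RingHomCompTriple.comp_apply, RingHom.id_apply]
    ring
  exact ⟨h', h'.tsum_eq⟩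

lemma repFun_dl (β : ℕ → ℝ) (n : ℕ) (z : ℂ) : repFun β (dl n) z = z ^ n / (β n : ℂ) := by
  unfold repFun
  rw [tsum_eq_single n]
  · simp [dl_apply]; ring
  · intro k hk
    simp [dl_apply, hk]

/-- linearity in disguise: equality of evaluations may be checked on basis vectors -/
lemma repFun_ext (β β' : ℕ → ℝ) (hβ : GoodWeight β) (hβ' : GoodWeight β') (z z' : ℂ)
    (hz : z ∈ unitDisk) (hz' : z' ∈ unitDisk) (c : ℂ) (T : H2 →L[ℂ] H2)
    (h : ∀ n, repFun β (T (dl n)) z = c * (z' ^ n / (β' n : ℂ))) (a : H2) :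
    repFun β (T a) z = c * repFun β' a z' := by
  obtain ⟨k, -, hk⟩ := exists_kernel β hβ z hz
  obtain ⟨k', -, hk'⟩ := exists_kernel β' hβ' z' hz'
  have : (innerSL ℂ k) ∘L T = c • innerSL ℂ k' := by
    refine clm_ext_dl fun n => ?_
    have h1 := h n
    rw [← repFun_dl, (hk _).2, (hk' _).2] at h1
    simpa using h1
  have h2 := congrArg (fun F => F a) this
  rw [(hk _).2, (hk' _).2]
  simpa using h2

lemma repFun_sum (β : ℕ → ℝ) (hβ : GoodWeight β) (z : ℂ) (hz : z ∈ unitDisk) {ι : Type*}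
    (s : Finset ι) (f : ι → H2) :
    repFun β (∑ i ∈ s, f i) z = ∑ i ∈ s, repFun β (f i) z := by
  obtain ⟨k, -, hk⟩ := exists_kernel β hβ z hz
  simp only [(hk _).2]
  rw [inner_sum]

lemma repFun_sub (β : ℕ → ℝ) (hβ : GoodWeight β) (z : ℂ) (hz : z ∈ unitDisk) (f g : H2) :
    repFun β (f - g) z = repFun β f z - repFun β g z := by
  obtain ⟨k, -, hk⟩ := exists_kernel β hβ z hz
  simp only [(hk _).2]
  rw [inner_sub_right]

lemma repFun_smul (β : ℕ → ℝ) (hβ : GoodWeight β) (z : ℂ) (hz : z ∈ unitDisk) (c : ℂ) (f : H2) :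
    repFun β (c • f) z = c * repFun β f z := by
  obtain ⟨k, -, hk⟩ := exists_kernel β hβ z hz
  simp only [(hk _).2]
  rw [inner_smul_right]

/-- constant weight -/
def oneW : ℕ → ℝ := fun _ => 1

lemma good_oneW : GoodWeight oneW := by
  refine ⟨fun _ => one_pos, fun K => ⟨1, zero_le_one, fun j n _ _ => by simp [oneW]⟩,
    fun σ hσ => ⟨1, zero_le_one, fun j => ?_⟩⟩
  have := one_le_pow₀ hσ.le (n := j)
  simp [oneW, this]

lemma exists_isometry_of_orthonormal (v : ℕ → H2) (hv : Orthonormal ℂ v) :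
    ∃ A : H2 →ₗᵢ[ℂ] H2, ∀ n, A (dl n) = v n := by
  refine ⟨hv.orthogonalFamily.linearIsometry, fun n => ?_⟩
  unfold dl
  rw [OrthogonalFamily.linearIsometry_apply_single]
  simp

lemma orthonormal_dl : Orthonormal ℂ dl := by
  rw [orthonormal_iff_ite]
  intro i j
  rw [inner_dl, dl_apply]

lemma exists_shift : ∃ S : H2 →ₗᵢ[ℂ] H2, ∀ n, S (dl n) = dl (n + 1) :=
  exists_isometry_of_orthonormal _ (orthonormal_dl.comp (fun n => n + 1) (add_left_injective 1))

lemma one_sub_conj_mul_ne {a z : ℂ} (ha : ‖a‖ < 1) (hz : ‖z‖ ≤ 1) :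
    1 - (starRingEnd ℂ) a * z ≠ 0 := by
  intro h
  have h1 : (starRingEnd ℂ) a * z = 1 := by linear_combination -h
  have h2 : ‖a‖ * ‖z‖ = 1 := by rw [← RCLike.norm_conj a, ← norm_mul, h1, norm_one]
  have := norm_nonneg a
  have := norm_nonneg z
  nlinarith

/-- multiplication by a Möbius factor on the classical Hardy space -/
lemma exists_mobius (a c : ℂ) (ha : a ∈ unitDisk) (hc : ‖c‖ = 1) :
    ∃ V : H2 →ₗᵢ[ℂ] H2,
      (∀ f z, z ∈ unitDisk → repFun oneW (V f) z = c * mobius a z * repFun oneW f z) ∧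
      ∀ f, repFun oneW f a = 0 → ∃ g, V g = f := by
  obtain ⟨S, hS⟩ := exists_shift
  have hSev : ∀ f z, z ∈ unitDisk → repFun oneW (S f) z = z * repFun oneW f z := by
    intro f z hz
    refine repFun_ext oneW oneW good_oneW good_oneW z z hz hz z S.toContinuousLinearMap ?_ f
    intro n
    change repFun oneW (S (dl n)) z = _
    rw [hS, repFun_dl]; simp [oneW]; ring
  have ha1 := (unitDisk_iff a).1 ha
  let Sc : H2 →L[ℂ] H2 := S.toContinuousLinearMap
  have hSc : ∀ f, Sc f = S f := fun f => rfl
  have hnorm : ‖((starRingEnd ℂ) a) • Sc‖ < 1 := by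
    rw [norm_smul, RCLike.norm_conj]
    have h1 : ‖Sc‖ ≤ 1 := S.norm_toContinuousLinearMap_le
    have := norm_nonneg a
    have := norm_nonneg Sc
    nlinarith
  obtain ⟨u, hu⟩ := isUnit_one_sub_of_norm_lt_one hnorm
  let R : H2 →L[ℂ] H2 := ((u⁻¹ : (H2 →L[ℂ] H2)ˣ) : H2 →L[ℂ] H2)
  have hR1 : ∀ f, R f - ((starRingEnd ℂ) a) • S (R f) = f := by
    intro f
    have h : (u : H2 →L[ℂ] H2) * R = 1 := u.mul_inv
    have h2 := congrArg (fun F => F f) h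
    rw [hu] at h2
    simpa [hSc] using h2
  have hR2 : ∀ g, R (g - ((starRingEnd ℂ) a) • S g) = g := by
    intro g
    have h : R * (u : H2 →L[ℂ] H2) = 1 := u.inv_mul
    have h2 := congrArg (fun F => F g) h
    rw [hu] at h2
    simpa [hSc] using h2
  have hiso : ∀ g : H2, ‖a • g - S g‖ = ‖g - ((starRingEnd ℂ) a) • S g‖ := by
    intro g
    have h1 : ‖a • g - S g‖ ^ 2 = ‖g - ((starRingEnd ℂ) a) • S g‖ ^ 2 := by
      rw [norm_sub_sq (𝕜 := ℂ), norm_sub_sq (𝕜 := ℂ), inner_smul_left, inner_smul_right,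
        norm_smul, norm_smul, S.norm_map, RCLike.norm_conj]
      ring
    exact (pow_left_inj₀ (norm_nonneg _) (norm_nonneg _) two_ne_zero).1 h1
  let Vc : H2 →L[ℂ] H2 := c • ((a • (1 : H2 →L[ℂ] H2) - Sc) ∘L R)
  have hVc : ∀ f, Vc f = c • (a • R f - S (R f)) := fun f => by simp [Vc, hSc]
  let V : H2 →ₗᵢ[ℂ] H2 := ⟨Vc, fun f => by
    change ‖Vc f‖ = ‖f‖
    rw [hVc, norm_smul, hc, one_mul, hiso, hR1]⟩
  have hV : ∀ f, V f = c • (a • R f - S (R f)) := hVc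
  refine ⟨V, ?_, ?_⟩
  · intro f z hz
    have e1 : repFun oneW f z = (1 - (starRingEnd ℂ) a * z) * repFun oneW (R f) z := by
      conv_lhs => rw [← hR1 f]
      rw [repFun_sub _ good_oneW _ hz, repFun_smul _ good_oneW _ hz, hSev _ _ hz]; ring
    have e2 : repFun oneW (V f) z = c * ((a - z) * repFun oneW (R f) z) := by
      rw [hV, repFun_smul _ good_oneW _ hz, repFun_sub _ good_oneW _ hz,
        repFun_smul _ good_oneW _ hz, hSev _ _ hz]; ring
    have hne := one_sub_conj_mul_ne ha1 ((unitDisk_iff z).1 hz).le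
    rw [e1, e2]
    unfold mobius
    generalize 1 - (starRingEnd ℂ) a * z = D at hne ⊢
    field_simp
  · intro f hf
    obtain ⟨k, hk, hke⟩ := exists_kernel oneW good_oneW a ha
    let K : Submodule ℂ H2 := LinearMap.range V.toLinearMap
    have hKc : IsClosed (K : Set H2) := by
      have := V.isometry.isClosedEmbedding.isClosed_range
      have hKe : (K : Set H2) = Set.range V := by
        ext y
        constructor
        · rintro ⟨x, hx⟩
          exact ⟨x, hx⟩
        · rintro ⟨x, hx⟩
          exact ⟨x, hx⟩
      rw [hKe]
      exact this
    have hKK : Kᗮᗮ = K := by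
      rw [Submodule.orthogonal_orthogonal_eq_closure, hKc.submodule_topologicalClosure_eq]
    have hfK : f ∈ K := by
      rw [← hKK, Submodule.mem_orthogonal]
      intro h hh
      rw [Submodule.mem_orthogonal] at hh
      have hrec : ∀ n, h (n + 1) = (starRingEnd ℂ) a * h n := by
        intro n
        have h1 := hh (V (dl n - ((starRingEnd ℂ) a) • S (dl n))) ⟨_, rfl⟩
        rw [hV, hR2, inner_smul_left, inner_sub_left, inner_smul_left, hS, inner_dl, inner_dl] at h1
        have hc0 : (starRingEnd ℂ) c ≠ 0 := by
          rw [← norm_ne_zero_iff, RCLike.norm_conj, hc]; norm_num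
        have h2 := (mul_eq_zero.1 h1).resolve_left hc0
        linear_combination -h2
      have hpw : ∀ n, h n = (starRingEnd ℂ) a ^ n * h 0 := by
        intro n
        induction n with
        | zero => simp
        | succ n ih => rw [hrec, ih]; ring
      have hhk : h = (h 0) • k := by
        ext n
        rw [lp.coeFn_smul, Pi.smul_apply, hk, hpw, smul_eq_mul]
        simp [oneW]; ring
      rw [hhk, inner_smul_left, ← (hke f).2, hf, mul_zero]
    obtain ⟨g, hg⟩ := hfK
    exact ⟨g, hg⟩

lemma coef_bound (f : H2) (G : ℂ → ℂ) (hG : ∀ x ∈ unitDisk, repFun oneW f x = G x) (R C : ℝ)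
    (hR : 0 < R) (hd : DiffContOnCl ℂ G (Metric.ball 0 R))
    (hC : ∀ x ∈ Metric.sphere (0:ℂ) R, ‖G x‖ ≤ C) (j : ℕ) : ‖f j‖ ≤ C / R ^ j := by
  have h1 : HasFPowerSeriesAt G (FormalMultilinearSeries.ofScalars ℂ (fun n => f n)) 0 := by
    rw [hasFPowerSeriesAt_iff]
    have : unitDisk ∈ 𝓝 (0:ℂ) := Metric.ball_mem_nhds 0 one_pos
    filter_upwards [this] with x hx
    obtain ⟨k, -, hk⟩ := exists_kernel oneW good_oneW x hx
    have h2 := (hk f).1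
    rw [← (hk f).2, hG x hx] at h2
    rw [zero_add]
    convert! h2 using 2 with n
    rw [FormalMultilinearSeries.coeff_ofScalars]
    simp [oneW, mul_comm]
  obtain ⟨r, hr⟩ := h1
  have h2 := hr.factorial_smul (1:ℂ) j
  have h3 := Complex.norm_iteratedDeriv_le_of_forall_mem_sphere_norm_le j hR hd hC
  rw [iteratedDeriv_eq_iteratedFDeriv, ← h2] at h3
  have h4 : (FormalMultilinearSeries.ofScalars ℂ (fun n => f n)) j (fun _ => (1:ℂ)) = f j := by
    have := FormalMultilinearSeries.coeff_ofScalars (𝕜 := ℂ) (p := fun n => f n) (n := j)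
    exact this
  rw [h4, nsmul_eq_mul, norm_mul, Complex.norm_natCast, mul_div_assoc] at h3
  have hf : (0:ℝ) < j.factorial := by exact_mod_cast Nat.factorial_pos j
  exact le_of_mul_le_mul_left h3 hf

lemma eq_zero_of_repFun (f : H2) (h : ∀ x ∈ unitDisk, repFun oneW f x = 0) : f = 0 := by
  ext j
  have := coef_bound f (fun _ => 0) h 1 0 one_pos diffContOnCl_const (by simp) j
  simpa using this

lemma repFun_kernel (a : ℂ) (ha : a ∈ unitDisk) (k : H2)
    (hk : ∀ n, k n = (starRingEnd ℂ) (a ^ n / (oneW n : ℂ))) (x : ℂ) (hx : x ∈ unitDisk) :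
    repFun oneW k x = (1 - (starRingEnd ℂ) a * x)⁻¹ := by
  unfold repFun
  rw [unitDisk_iff] at ha hx
  rw [← tsum_geometric_of_norm_lt_one]
  · congr 1
    ext n
    rw [hk]
    simp [oneW, mul_pow]
  · rw [norm_mul, RCLike.norm_conj]
    have := norm_nonneg a
    have := norm_nonneg x
    nlinarith

lemma exists_basis (z c : ℕ → ℂ) (hz : ∀ k, z k ∈ unitDisk) (hc : ∀ k, ‖c k‖ = 1)
    (hlim : ∀ x ∈ unitDisk,
      Tendsto (fun N => ∏ k ∈ Finset.range N, c k * mobius (z k) x) atTop (𝓝 0)) :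
    ∃ e : ℕ → H2, ∃ d : ℂ → ℂ, Orthonormal ℂ e ∧
      (∀ f, (∀ N, inner ℂ (e N) f = 0) → f = 0) ∧
      ∀ N, ∀ x ∈ unitDisk, repFun oneW (e N) x =
        (∏ k ∈ Finset.range N, c k * mobius (z k) x) *
          (d (z N) * (1 - (starRingEnd ℂ) (z N) * x)⁻¹) := by
  have hker : ∀ a : ℂ, ∃ k : H2, a ∈ unitDisk →
      (∀ n, k n = (starRingEnd ℂ) (a ^ n / (oneW n : ℂ))) ∧
      ∀ f : H2, repFun oneW f a = inner ℂ k f := by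
    intro a
    by_cases ha : a ∈ unitDisk
    · obtain ⟨k, hk, hk2⟩ := exists_kernel oneW good_oneW a ha
      exact ⟨k, fun _ => ⟨hk, fun f => (hk2 f).2⟩⟩
    · exact ⟨0, fun h => absurd h ha⟩
  choose κ hκ using hker
  choose V hV1 hV2 using fun k => exists_mobius (z k) (c k) (hz k) (hc k)
  let W : ℕ → (H2 →ₗᵢ[ℂ] H2) := fun N => Nat.rec LinearIsometry.id (fun n A => A.comp (V n)) N
  have hW0 : ∀ f, W 0 f = f := fun f => rfl
  have hWs : ∀ N f, W (N + 1) f = W N (V N f) := fun N f => rfl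
  have hWev : ∀ N f x, x ∈ unitDisk → repFun oneW (W N f) x =
      (∏ k ∈ Finset.range N, c k * mobius (z k) x) * repFun oneW f x := by
    intro N
    induction N with
    | zero => intro f x _; simp [hW0]
    | succ N ih =>
      intro f x hx
      rw [hWs, ih _ _ hx, hV1 _ _ _ hx, Finset.prod_range_succ]; ring
  have hκne : ∀ a ∈ unitDisk, κ a ≠ 0 := by
    intro a ha h
    have := (hκ a ha).1 0
    rw [h] at this
    simp [oneW] at this
  let d : ℂ → ℂ := fun a => ((‖κ a‖⁻¹ : ℝ) : ℂ)
  have hdne : ∀ a ∈ unitDisk, d a ≠ 0 := by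
    intro a ha
    have := norm_ne_zero_iff.2 (hκne a ha)
    simp only [d, Complex.ofReal_inv]
    exact inv_ne_zero (by exact_mod_cast this)
  let e : ℕ → H2 := fun N => W N (d (z N) • κ (z N))
  have hmob : ∀ a, mobius a a = 0 := by intro a; simp [mobius]
  have horth : ∀ N M, N < M → inner ℂ (e N) (e M) = 0 := by
    intro N M h
    have hr : ∀ M, N + 1 ≤ M → ∀ x, ∃ y, W M x = W (N + 1) y := by
      intro M hM
      induction M, hM using Nat.le_induction with
      | base => exact fun x => ⟨x, rfl⟩
      | succ M _ ih =>
        intro x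
        rw [hWs]
        exact ih _
    obtain ⟨y, hy⟩ := hr M h (d (z M) • κ (z M))
    change inner ℂ (W N _) (W M _) = 0
    rw [hy, hWs, LinearIsometry.inner_map_map, inner_smul_left, ← (hκ _ (hz N)).2,
      hV1 _ _ _ (hz N), hmob]
    simp
  refine ⟨e, d, ⟨?_, ?_⟩, ?_, ?_⟩
  · intro N
    change ‖W N _‖ = 1
    rw [LinearIsometry.norm_map, norm_smul]
    have := norm_ne_zero_iff.2 (hκne _ (hz N))
    simp only [d, Complex.norm_real, norm_inv, norm_norm]
    field_simp
  · intro N M h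
    rcases lt_or_gt_of_ne h with h | h
    · exact horth N M h
    · rw [← inner_conj_symm, horth M N h, map_zero]
  · intro f hf
    have hrange : ∀ N, ∃ g, W N g = f := by
      intro N
      induction N with
      | zero => exact ⟨f, rfl⟩
      | succ N ih =>
        obtain ⟨g, hg⟩ := ih
        have h1 := hf N
        rw [← hg] at h1
        change inner ℂ (W N _) (W N _) = 0 at h1
        rw [LinearIsometry.inner_map_map, inner_smul_left, ← (hκ _ (hz N)).2] at h1
        have h2 := (mul_eq_zero.1 h1).resolve_left
          ((map_ne_zero _).2 (hdne _ (hz N)))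
        obtain ⟨g', hg'⟩ := hV2 N g h2
        exact ⟨g', by rw [hWs, hg', hg]⟩
    refine eq_zero_of_repFun f fun x hx => ?_
    have hb : ∀ N, ‖repFun oneW f x‖ ≤
        ‖∏ k ∈ Finset.range N, c k * mobius (z k) x‖ * (‖κ x‖ * ‖f‖) := by
      intro N
      obtain ⟨g, hg⟩ := hrange N
      have hn : ‖g‖ = ‖f‖ := by rw [← hg, LinearIsometry.norm_map]
      conv_lhs => rw [← hg]
      rw [hWev _ _ _ hx, norm_mul, (hκ x hx).2, ← hn]
      gcongr
      exact norm_inner_le_norm _ _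
    have hl := ((hlim x hx).norm).mul_const (‖κ x‖ * ‖f‖)
    rw [norm_zero, zero_mul] at hl
    have := ge_of_tendsto' hl hb
    exact norm_le_zero_iff.1 this
  · intro N x hx
    change repFun oneW (W N _) x = _
    rw [hWev _ _ _ hx, repFun_smul _ good_oneW _ hx,
      repFun_kernel _ (hz N) _ (hκ _ (hz N)).1 x hx]

lemma mobius_bound (r s : ℝ) (hr0 : 0 ≤ r) (hr : r < 1) (hs0 : 0 ≤ s) (hs : s < 1) :
    ∃ q : ℝ, 0 < q ∧ q < 1 ∧ ∀ a x : ℂ, ‖a‖ ≤ r → ‖x‖ ≤ s → ‖mobius a x‖ ≤ q := by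
  have hr2 : 0 < 1 - r ^ 2 := by nlinarith
  have hs2 : 0 < 1 - s ^ 2 := by nlinarith
  set η := (1 - r ^ 2) * (1 - s ^ 2) / 4 with hη
  have hη0 : 0 < η := by positivity
  have hη1 : η < 1 := by
    have : (1 - r ^ 2) * (1 - s ^ 2) ≤ 1 * 1 := by
      apply mul_le_mul <;> nlinarith
    rw [hη]; linarith
  refine ⟨Real.sqrt (1 - η), Real.sqrt_pos.2 (by linarith), ?_, ?_⟩
  · rw [Real.sqrt_lt' one_pos]; linarith
  · intro a x ha hx
    apply Real.le_sqrt_of_sq_le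
    have hne := one_sub_conj_mul_ne (a := a) (z := x) (by linarith) (by linarith)
    unfold mobius
    rw [norm_div, div_pow]
    have hpos : 0 < ‖1 - (starRingEnd ℂ) a * x‖ ^ 2 := pow_pos (norm_pos_iff.2 hne) 2
    rw [div_le_iff₀ hpos]
    have hid : ‖a - x‖ ^ 2 = ‖1 - (starRingEnd ℂ) a * x‖ ^ 2 - (1 - ‖a‖ ^ 2) * (1 - ‖x‖ ^ 2) := by
      rw [← Complex.normSq_eq_norm_sq, ← Complex.normSq_eq_norm_sq, ← Complex.normSq_eq_norm_sq,
        ← Complex.normSq_eq_norm_sq]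
      simp only [Complex.normSq_apply, Complex.sub_re, Complex.sub_im, Complex.mul_re,
        Complex.mul_im, Complex.conj_re, Complex.conj_im, Complex.one_re, Complex.one_im]
      ring
    have hup : ‖1 - (starRingEnd ℂ) a * x‖ ^ 2 ≤ 4 := by
      have h1 : ‖1 - (starRingEnd ℂ) a * x‖ ≤ 2 := by
        refine (norm_sub_le _ _).trans ?_
        rw [norm_one, norm_mul, RCLike.norm_conj]
        have := norm_nonneg a
        have := norm_nonneg x
        nlinarith
      have := norm_nonneg (1 - (starRingEnd ℂ) a * x)
      nlinarith
    have hlow : (1 - r ^ 2) * (1 - s ^ 2) ≤ (1 - ‖a‖ ^ 2) * (1 - ‖x‖ ^ 2) := by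
      have h1 : ‖a‖ ^ 2 ≤ r ^ 2 := pow_le_pow_left₀ (norm_nonneg _) ha 2
      have h2 : ‖x‖ ^ 2 ≤ s ^ 2 := pow_le_pow_left₀ (norm_nonneg _) hx 2
      apply mul_le_mul <;> linarith
    rw [hid]
    have : η * ‖1 - (starRingEnd ℂ) a * x‖ ^ 2 ≤ η * 4 := by gcongr
    have e4 : η * 4 = (1 - r ^ 2) * (1 - s ^ 2) := by rw [hη]; ring
    linarith

lemma farDecay_of (A : H2 →L[ℂ] H2) (C q P R : ℝ) (hC : 0 ≤ C) (hq0 : 0 < q) (hq1 : q < 1)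
    (hP : 1 ≤ P) (hR : 1 < R)
    (h1 : ∀ j n, ‖A (dl n) j‖ ≤ C * q ^ n * 2 ^ j)
    (h2 : ∀ j n, ‖A (dl n) j‖ ≤ C * P ^ n * (R⁻¹) ^ j) : FarDecay A := by
  have hRi : R⁻¹ < 1 := inv_lt_one_of_one_lt₀ hR
  have hRi0 : 0 < R⁻¹ := by positivity
  set ρ := Real.sqrt (max q R⁻¹) with hρ
  have hm0 : 0 < max q R⁻¹ := lt_max_of_lt_left hq0
  have hm1 : max q R⁻¹ < 1 := max_lt hq1 hRi
  have hρ0 : 0 < ρ := Real.sqrt_pos.2 hm0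
  have hρ1 : ρ < 1 := by rw [hρ, Real.sqrt_lt' one_pos]; linarith
  have hρ2 : ρ ^ 2 = max q R⁻¹ := Real.sq_sqrt hm0.le
  have hqρ : q ≤ ρ ^ 2 := by rw [hρ2]; exact le_max_left _ _
  have hRρ : R⁻¹ ≤ ρ ^ 2 := by rw [hρ2]; exact le_max_right _ _
  obtain ⟨K, hK⟩ := exists_pow_lt_of_lt_one (show 0 < min (ρ / 2) (ρ / P) by positivity) hρ1
  have hK1 : ρ ^ K * 2 ≤ ρ := by
    have := hK.le.trans (min_le_left _ _)
    linarith
  have hK2 : ρ ^ K * P ≤ ρ := by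
    have := hK.le.trans (min_le_right _ _)
    rwa [le_div_iff₀ (by linarith)] at this
  have hK0 : 1 ≤ K := by
    rcases Nat.eq_zero_or_pos K with h | h
    · rw [h] at hK1; norm_num at hK1; linarith
    · exact h
  refine ⟨K, C, ρ, hC, hρ0, hρ1, ?_⟩
  rintro j n (h | h)
  · have hj : K * n ≤ j := by nlinarith
    calc ‖A (dl n) j‖ ≤ C * P ^ n * (R⁻¹) ^ j := h2 j n
      _ ≤ C * P ^ n * (ρ ^ 2) ^ j := by gcongr
      _ = C * (P ^ n * ρ ^ j * ρ ^ j) := by ring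
      _ ≤ C * (P ^ n * ρ ^ (K * n) * ρ ^ j) := by
          have := pow_le_pow_of_le_one hρ0.le hρ1.le hj
          gcongr
      _ = C * ((ρ ^ K * P) ^ n * ρ ^ j) := by rw [mul_pow, pow_mul]; ring
      _ ≤ C * (ρ ^ n * ρ ^ j) := by gcongr
      _ = _ := by rw [pow_add]; ring
  · have hj : K * j ≤ n := by nlinarith
    calc ‖A (dl n) j‖ ≤ C * q ^ n * 2 ^ j := h1 j n
      _ ≤ C * (ρ ^ 2) ^ n * 2 ^ j := by gcongr
      _ = C * (2 ^ j * ρ ^ n * ρ ^ n) := by ring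
      _ ≤ C * (2 ^ j * ρ ^ (K * j) * ρ ^ n) := by
          have := pow_le_pow_of_le_one hρ0.le hρ1.le hj
          gcongr
      _ = C * ((ρ ^ K * 2) ^ j * ρ ^ n) := by rw [mul_pow, pow_mul]; ring
      _ ≤ C * (ρ ^ j * ρ ^ n) := by gcongr
      _ = _ := by rw [pow_add]

/-- the rational functions `(∏_{k<N} c_k φ_k) d / (1 - conj b x)` -/
def ratF (z c : ℕ → ℂ) (N : ℕ) (dd b x : ℂ) : ℂ :=
  (∏ k ∈ Finset.range N, c k * mobius (z k) x) * (dd * (1 - (starRingEnd ℂ) b * x)⁻¹)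

lemma den_lower (r R : ℝ) (a x : ℂ) (hr : 0 ≤ r) (ha : ‖a‖ ≤ r) (hx : ‖x‖ ≤ R) :
    1 - r * R ≤ ‖1 - (starRingEnd ℂ) a * x‖ := by
  have h1 := norm_sub_norm_le (1:ℂ) ((starRingEnd ℂ) a * x)
  rw [norm_one, norm_mul, RCLike.norm_conj] at h1
  have : ‖a‖ * ‖x‖ ≤ r * R := by gcongr
  linarith

lemma ratF_diff (z c : ℕ → ℂ) (N : ℕ) (dd b : ℂ) (r R : ℝ) (hr : 0 ≤ r) (hrR : r * R < 1)
    (hz : ∀ k, ‖z k‖ ≤ r) (hb : ‖b‖ ≤ r) :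
    DifferentiableOn ℂ (ratF z c N dd b) (Metric.closedBall 0 R) := by
  have hne : ∀ a : ℂ, ‖a‖ ≤ r → ∀ x ∈ Metric.closedBall (0:ℂ) R,
      1 - (starRingEnd ℂ) a * x ≠ 0 := by
    intro a ha x hx
    rw [mem_closedBall_zero_iff] at hx
    have := den_lower r R a x hr ha hx
    exact norm_pos_iff.1 (by linarith)
  have hden : ∀ a : ℂ, DifferentiableOn ℂ (fun x : ℂ => 1 - (starRingEnd ℂ) a * x)
      (Metric.closedBall 0 R) := by
    intro a; fun_prop
  unfold ratF
  refine DifferentiableOn.mul ?_ ((differentiableOn_const _).mul ((hden b).inv (hne b hb)))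
  refine DifferentiableOn.fun_finset_prod fun k _ => ?_
  refine (differentiableOn_const _).mul ?_
  unfold mobius
  exact DifferentiableOn.div (by fun_prop) (hden (z k)) (hne _ (hz k))

lemma ratF_bound (z c : ℕ → ℂ) (hc : ∀ k, ‖c k‖ = 1) (N : ℕ) (dd b x : ℂ) (r R q D : ℝ)
    (hr : 0 ≤ r) (hrR : r * R < 1) (hx : ‖x‖ ≤ R)
    (hb : ‖b‖ ≤ r) (hq : ∀ k, ‖mobius (z k) x‖ ≤ q) (hD : ‖dd‖ ≤ D) :
    ‖ratF z c N dd b x‖ ≤ q ^ N * (D * (1 - r * R)⁻¹) := by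
  unfold ratF
  have hlow := den_lower r R b x hr hb hx
  have hpos : 0 < 1 - r * R := by linarith
  have hD0 : 0 ≤ D := (norm_nonneg _).trans hD
  have hq0 : 0 ≤ q := (norm_nonneg _).trans (hq 0)
  rw [norm_mul, norm_mul, norm_inv, norm_prod]
  have hp : ∏ k ∈ Finset.range N, ‖c k * mobius (z k) x‖ ≤ q ^ N := by
    refine (Finset.prod_le_prod (fun _ _ => norm_nonneg _) (g := fun _ => q) ?_).trans ?_
    · intro k _
      rw [norm_mul, hc, one_mul]; exact hq k
    · simp
  gcongr

lemma prod_period (m : ℕ) (f : ℕ → ℂ) (hf : ∀ k, f (m + k) = f k) (n i : ℕ) :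
    ∏ k ∈ Finset.range (n * m + i), f k =
      (∏ k ∈ Finset.range m, f k) ^ n * ∏ k ∈ Finset.range i, f k := by
  induction n with
  | zero => simp
  | succ n ih =>
    have : (n + 1) * m + i = m + (n * m + i) := by ring
    rw [this, Finset.prod_range_add]
    simp only [hf]
    rw [ih]; ring

lemma exists_isoms (m : ℕ) (hm : 0 < m) (e : ℕ → H2) (he : Orthonormal ℂ e)
    (hc : ∀ f, (∀ N, inner ℂ (e N) f = 0) → f = 0) :
    ∃ A : Fin m → H2 →L[ℂ] H2, (∀ i n, A i (dl n) = e (n * m + i)) ∧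
      (∀ i k, ContinuousLinearMap.adjoint (A i) ∘L A k =
        if i = k then ContinuousLinearMap.id ℂ H2 else 0) ∧
      ∑ i, A i ∘L ContinuousLinearMap.adjoint (A i) = ContinuousLinearMap.id ℂ H2 := by
  have hinj : ∀ (i k : Fin m) (n l : ℕ), n * m + (i : ℕ) = l * m + (k : ℕ) → n = l ∧ i = k := by
    intro i k n l h
    have h1 : (n * m + (i : ℕ)) % m = (l * m + (k : ℕ)) % m := by rw [h]
    have h2 : (i : ℕ) = k := by
      simpa [Nat.mul_add_mod_self_right, Nat.mod_eq_of_lt i.2, Nat.mod_eq_of_lt k.2] using h1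
    rw [h2] at h
    exact ⟨Nat.eq_of_mul_eq_mul_right hm (by omega), Fin.ext h2⟩
  have hA : ∀ i : Fin m, ∃ A : H2 →ₗᵢ[ℂ] H2, ∀ n, A (dl n) = e (n * m + i) := fun i =>
    exists_isometry_of_orthonormal (fun n => e (n * m + i))
      (he.comp (fun n => n * m + (i : ℕ)) (fun n l h => (hinj i i n l h).1))
  choose A hA using hA
  have hee := orthonormal_iff_ite.1 he
  have hadj : ∀ i k : Fin m,
      ContinuousLinearMap.adjoint (A i).toContinuousLinearMap ∘L (A k).toContinuousLinearMap =
        if i = k then ContinuousLinearMap.id ℂ H2 else 0 := by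
    intro i k
    refine clm_ext_dl fun n => ?_
    ext j
    rw [← inner_dl, ContinuousLinearMap.comp_apply, ContinuousLinearMap.adjoint_inner_right]
    simp only [LinearIsometry.coe_toContinuousLinearMap]
    rw [hA, hA, hee]
    by_cases h : i = k
    · subst h
      simp only [if_true, ContinuousLinearMap.id_apply, dl_apply]
      congr 1
      simp only [eq_iff_iff]
      exact ⟨fun h => (hinj _ _ _ _ h).1, fun h => by rw [h]⟩
    · rw [if_neg (fun h' => h (hinj _ _ _ _ h').2), if_neg h]
      simp
  refine ⟨fun i => (A i).toContinuousLinearMap, fun i n => hA i n, hadj, ?_⟩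
  ext1 f
  rw [← sub_eq_zero]
  refine hc _ fun N => ?_
  obtain ⟨i, n, rfl⟩ : ∃ (i : Fin m) (n : ℕ), N = n * m + i :=
    ⟨⟨N % m, Nat.mod_lt _ hm⟩, N / m, by rw [mul_comm]; exact (Nat.div_add_mod N m).symm⟩
  rw [inner_sub_right, ← hA, ContinuousLinearMap.sum_apply, inner_sum]
  rw [Finset.sum_eq_single i]
  · simp only [ContinuousLinearMap.comp_apply, LinearIsometry.coe_toContinuousLinearMap,
      LinearIsometry.inner_map_map, ContinuousLinearMap.adjoint_inner_right,
      ContinuousLinearMap.id_apply, sub_self]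
  · intro k _ hk
    have h1 := hadj k i
    rw [if_neg hk] at h1
    have h2 := congrArg (fun T : H2 →L[ℂ] H2 => T (dl n)) h1
    simp only [ContinuousLinearMap.comp_apply, LinearIsometry.coe_toContinuousLinearMap,
      ContinuousLinearMap.zero_apply] at h2
    rw [ContinuousLinearMap.comp_apply]
    simp only [LinearIsometry.coe_toContinuousLinearMap]
    have h3 := ContinuousLinearMap.adjoint_inner_left (A k).toContinuousLinearMap
      (ContinuousLinearMap.adjoint (A k).toContinuousLinearMap f) (A i (dl n))
    rw [h2, inner_zero_left] at h3
    exact h3.symm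
  · simp

/-- final assembly from the unweighted operators -/
lemma assemble (β : ℕ → ℝ) (hβ : GoodWeight β) (m : ℕ) (B : ℂ → ℂ)
    (hBd : ∀ x ∈ unitDisk, B x ∈ unitDisk)
    (A : Fin m → H2 →L[ℂ] H2) (g : Fin m → ℂ → ℂ) (hfar : ∀ i, FarDecay (A i))
    (hg : ∀ i n, ∀ x ∈ unitDisk, repFun oneW (A i (dl n)) x = g i x * B x ^ n)
    (h1 : ∀ i k, ContinuousLinearMap.adjoint (A i) ∘L A k =
        if i = k then ContinuousLinearMap.id ℂ H2 else 0)
    (h2 : ∑ i, A i ∘L ContinuousLinearMap.adjoint (A i) = ContinuousLinearMap.id ℂ H2) :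
    ∃ TB Tz : H2 →L[ℂ] H2,
      RepMul β B TB ∧ RepMul β (fun z => z) Tz ∧
        ∃ X : Hm m ≃L[ℂ] H2, ∀ v : Hm m, TB (X v) = X (WithLp.toLp 2 (fun i => Tz (v i))) := by
  have hβ0 : ∀ n, (β n : ℂ) ≠ 0 := fun n => by exact_mod_cast (hβ.1 n).ne'
  obtain ⟨S, hS⟩ := exists_shift
  have hSfar : FarDecay S.toContinuousLinearMap := by
    refine ⟨3, 0, 1 / 2, le_rfl, by norm_num, by norm_num, fun j n h => ?_⟩
    simp only [LinearIsometry.coe_toContinuousLinearMap]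
    rw [hS, dl_apply, if_neg (by omega)]; simp
  obtain ⟨Tz, hTz⟩ := exists_wconj β hβ _ hSfar
  have hrepconj : ∀ (T Tt : H2 →L[ℂ] H2), WConj β T Tt → ∀ n x,
      repFun β (Tt (dl n)) x = repFun oneW (T (dl n)) x / (β n : ℂ) := by
    intro T Tt h n x
    unfold repFun
    rw [← tsum_div_const]
    refine tsum_congr fun k => ?_
    rw [h]
    have := hβ0 k
    have := hβ0 n
    simp only [oneW, Complex.ofReal_one]
    field_simp
  have hTzrep : RepMul β (fun z => z) Tz := by
    intro a z hz
    refine repFun_ext β β hβ hβ z z hz hz z Tz (fun n => ?_) a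
    rw [hrepconj _ _ hTz]
    simp only [LinearIsometry.coe_toContinuousLinearMap]
    rw [hS, repFun_dl]
    simp [oneW]; ring
  choose X hX using fun i => exists_wconj β hβ _ (hfar i)
  choose Y hY using fun i => exists_wconj β hβ _ (hfar i).adjoint
  have hYX : ∀ i k, Y i ∘L X k = if i = k then ContinuousLinearMap.id ℂ H2 else 0 := by
    intro i k
    have h := (hY i).comp hβ.1 (hX k)
    rw [h1] at h
    split_ifs at h ⊢
    · exact h.unique (WConj.one hβ.1)
    · exact h.unique WConj.zero
  have hXY : ∑ i, X i ∘L Y i = ContinuousLinearMap.id ℂ H2 := by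
    have h := WConj.sum (β := β) Finset.univ (fun i _ => (hX i).comp hβ.1 (hY i))
    rw [h2] at h
    exact h.unique (WConj.one hβ.1)
  have hXrep : ∀ i a, ∀ z ∈ unitDisk, repFun β (X i a) z = g i z * repFun β a (B z) := by
    intro i a z hz
    refine repFun_ext β β hβ hβ z (B z) hz (hBd z hz) (g i z) (X i) (fun n => ?_) a
    rw [hrepconj _ _ (hX i), hg i n z hz]; ring
  let XX : Hm m →L[ℂ] H2 := ∑ i, X i ∘L (PiLp.proj 2 (fun _ : Fin m => H2) i)
  let YY : H2 →L[ℂ] Hm m :=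
    ((PiLp.continuousLinearEquiv 2 ℂ (fun _ : Fin m => H2)).symm : (Fin m → H2) →L[ℂ] Hm m) ∘L
      ContinuousLinearMap.pi Y
  have hXXa : ∀ v, XX v = ∑ i, X i (v i) := by
    intro v; simp [XX, ContinuousLinearMap.sum_apply]
  have hYYa : ∀ f i, YY f i = Y i f := by
    intro f i; simp [YY]
  have hYX' : ∀ i k f, Y i (X k f) = if i = k then f else 0 := by
    intro i k f
    have := congrArg (fun T : H2 →L[ℂ] H2 => T f) (hYX i k)
    simp only [ContinuousLinearMap.comp_apply] at this
    rw [this]; split_ifs <;> simp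
  have hXY' : ∀ f, ∑ i, X i (Y i f) = f := by
    intro f
    have := congrArg (fun T : H2 →L[ℂ] H2 => T f) hXY
    simpa [ContinuousLinearMap.sum_apply] using this
  have hl : Function.LeftInverse YY XX := by
    intro v
    refine PiLp.ext fun i => ?_
    rw [hYYa, hXXa, map_sum]
    simp [hYX']
  have hr : Function.RightInverse YY XX := by
    intro f
    rw [hXXa]
    simp only [hYYa, hXY']
  let E : Hm m ≃L[ℂ] H2 := ContinuousLinearEquiv.equivOfInverse XX YY hl hr
  have hE : ∀ v, E v = XX v := fun v => rfl
  refine ⟨∑ i, X i ∘L Tz ∘L Y i, Tz, ?_, hTzrep, E, ?_⟩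
  · intro a z hz
    simp only [ContinuousLinearMap.sum_apply, ContinuousLinearMap.comp_apply]
    conv_rhs => rw [← hXY' a]
    rw [repFun_sum β hβ z hz, repFun_sum β hβ z hz, Finset.mul_sum]
    refine Finset.sum_congr rfl fun i _ => ?_
    rw [hXrep _ _ z hz, hXrep _ _ z hz, hTzrep _ _ (hBd z hz)]
    ring
  · intro v
    rw [hE, hE, hXXa, hXXa]
    simp only [ContinuousLinearMap.sum_apply, ContinuousLinearMap.comp_apply]
    refine Finset.sum_congr rfl fun i _ => ?_
    rw [map_sum]
    simp [hYX']

lemma mobius_bound_big (r R : ℝ) (hr : 0 ≤ r) (hr1 : r < 1) (hR : 1 ≤ R) (hrR : r * R < 1)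
    (a x : ℂ) (ha : ‖a‖ ≤ r) (hx : ‖x‖ ≤ R) : ‖mobius a x‖ ≤ (1 + R) / (1 - r * R) := by
  unfold mobius
  rw [norm_div]
  have h1 := den_lower r R a x hr ha hx
  have h2 : ‖a - x‖ ≤ 1 + R := (norm_sub_le a x).trans (by linarith)
  exact div_le_div₀ (by linarith) h2 (by linarith) h1

lemma basis_farDecay (m : ℕ) (hm : 0 < m) (z c : ℕ → ℂ) (r : ℝ) (hr : 0 ≤ r) (hr1 : r < 1)
    (hz : ∀ k, ‖z k‖ ≤ r) (hc : ∀ k, ‖c k‖ = 1) (e : ℕ → H2) (d : ℂ → ℂ) (D : ℝ)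
    (hD : ∀ k, ‖d (z k)‖ ≤ D)
    (he : ∀ N, ∀ x ∈ unitDisk, repFun oneW (e N) x = ratF z c N (d (z N)) (z N) x)
    (i : ℕ) (hi : i < m) (A : H2 →L[ℂ] H2) (hA : ∀ n, A (dl n) = e (n * m + i)) :
    FarDecay A := by
  obtain ⟨q, hq0, hq1, hq⟩ := mobius_bound r (1 / 2) hr hr1 (by norm_num) (by norm_num)
  set R : ℝ := 2 / (1 + r) with hRdef
  have hR : 1 < R := by rw [hRdef, lt_div_iff₀ (by linarith)]; linarith
  have hrR : r * R < 1 := by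
    rw [hRdef, ← mul_div_assoc, div_lt_one (by linarith)]; linarith
  have hden : 0 < 1 - r * R := by linarith
  set Q := (1 + R) / (1 - r * R) with hQ
  have hQ1 : 1 ≤ Q := by
    rw [hQ, le_div_iff₀ hden]
    have : 0 ≤ r * R := by positivity
    linarith
  have hD0 : 0 ≤ D := (norm_nonneg _).trans (hD 0)
  have hr2 : 0 < 1 - r * (1 / 2) := by linarith
  have hC1 : 0 ≤ D * (1 - r * (1 / 2))⁻¹ := by positivity
  have hC2 : 0 ≤ Q ^ m * (D * (1 - r * R)⁻¹) := by positivity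
  refine farDecay_of A (D * (1 - r * (1 / 2))⁻¹ + Q ^ m * (D * (1 - r * R)⁻¹)) q (Q ^ m) R
    (by positivity) hq0 hq1 (one_le_pow₀ hQ1) hR ?_ ?_
  · intro j n
    rw [hA]
    have h := coef_bound (e (n * m + i)) _ (he (n * m + i)) (1 / 2)
      (q ^ (n * m + i) * (D * (1 - r * (1 / 2))⁻¹)) (by norm_num)
      ((ratF_diff z c _ _ _ r (1 / 2) hr (by linarith) hz (hz _)).diffContOnCl_ball subset_rfl)
      (fun x hx => by
        rw [mem_sphere_zero_iff_norm] at hx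
        exact ratF_bound z c hc _ _ _ x r (1 / 2) q D hr (by linarith) hx.le (hz _)
          (fun k => hq _ _ (hz k) hx.le) (hD _)) j
    refine h.trans ?_
    have h3 : q ^ (n * m + i) ≤ q ^ n := by
      apply pow_le_pow_of_le_one hq0.le hq1.le
      have := Nat.le_mul_of_pos_right n hm
      omega
    have h4 : ((1:ℝ) / 2) ^ j = (2 ^ j)⁻¹ := by rw [one_div, inv_pow]
    rw [h4, div_inv_eq_mul]
    apply mul_le_mul_of_nonneg_right _ (by positivity)
    calc q ^ (n * m + i) * (D * (1 - r * (1 / 2))⁻¹)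
        ≤ q ^ n * (D * (1 - r * (1 / 2))⁻¹) := mul_le_mul_of_nonneg_right h3 hC1
      _ = (D * (1 - r * (1 / 2))⁻¹) * q ^ n := mul_comm _ _
      _ ≤ _ := mul_le_mul_of_nonneg_right (by linarith) (by positivity)
  · intro j n
    rw [hA]
    have h := coef_bound (e (n * m + i)) _ (he (n * m + i)) R
      (Q ^ (n * m + i) * (D * (1 - r * R)⁻¹)) (by linarith)
      ((ratF_diff z c _ _ _ r R hr (by linarith) hz (hz _)).diffContOnCl_ball subset_rfl)
      (fun x hx => by
        rw [mem_sphere_zero_iff_norm] at hx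
        exact ratF_bound z c hc _ _ _ x r R Q D hr (by linarith) hx.le (hz _)
          (fun k => mobius_bound_big r R hr hr1 hR.le hrR _ _ (hz k) hx.le) (hD _)) j
    refine h.trans ?_
    have h3 : Q ^ (n * m + i) ≤ Q ^ m * (Q ^ m) ^ n := by
      rw [← pow_mul, ← pow_add]
      apply pow_le_pow_right₀ hQ1
      rw [mul_comm n m]; omega
    rw [inv_pow, div_eq_mul_inv]
    apply mul_le_mul_of_nonneg_right _ (by positivity)
    have hC3 : 0 ≤ D * (1 - r * R)⁻¹ := by positivity
    calc Q ^ (n * m + i) * (D * (1 - r * R)⁻¹)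
        ≤ (Q ^ m * (Q ^ m) ^ n) * (D * (1 - r * R)⁻¹) := mul_le_mul_of_nonneg_right h3 hC3
      _ = (Q ^ m * (D * (1 - r * R)⁻¹)) * (Q ^ m) ^ n := by ring
      _ ≤ _ := mul_le_mul_of_nonneg_right (by linarith) (by positivity)

lemma prod_norm_le (z c : ℕ → ℂ) (hc : ∀ k, ‖c k‖ = 1) (x : ℂ) (q : ℝ)
    (hq : ∀ k, ‖mobius (z k) x‖ ≤ q) (N : ℕ) :
    ‖∏ k ∈ Finset.range N, c k * mobius (z k) x‖ ≤ q ^ N := by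
  rw [norm_prod]
  calc ∏ k ∈ Finset.range N, ‖c k * mobius (z k) x‖ ≤ ∏ k ∈ Finset.range N, q := by
        apply Finset.prod_le_prod (fun _ _ => norm_nonneg _)
        intro k _
        rw [norm_mul, hc, one_mul]; exact hq k
    _ = q ^ N := by simp

/-- On a weighted Hardy space `H²_β` of polynomial growth, for any
finite Blaschke product `B` of order `m`, `M_B` is similar to the direct sum of `m`
copies of `M_z`. -/
theorem statement1 (w : ℕ → ℝ) (hw : PolyGrowth w) (m : ℕ) (hm : 0 < m)
    (B : ℂ → ℂ) (hB : IsBlaschke m B) :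
    ∃ TB Tz : H2 →L[ℂ] H2,
      RepMul (betaSeq w) B TB ∧ RepMul (betaSeq w) (fun z => z) Tz ∧
        ∃ X : Hm m ≃L[ℂ] H2, ∀ v : Hm m, TB (X v) = X (WithLp.toLp 2 (fun i => Tz (v i))) := by
  obtain ⟨θ, zs, hzs, hBz⟩ := hB
  have hzs' : ∀ j, ‖zs j‖ < 1 := fun j => (unitDisk_iff _).1 (hzs j)
  have hne : Nonempty (Fin m) := ⟨⟨0, hm⟩⟩
  obtain ⟨j0, hj0⟩ := Finite.exists_max (fun j => ‖zs j‖)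
  set r := ‖zs j0‖ with hrdef
  have hr0 : 0 ≤ r := norm_nonneg _
  have hr1 : r < 1 := hzs' j0
  let z : ℕ → ℂ := fun k => zs ⟨k % m, Nat.mod_lt _ hm⟩
  let c : ℕ → ℂ := fun k => if k % m = 0 then Complex.exp (θ * Complex.I) else 1
  have hz : ∀ k, ‖z k‖ ≤ r := fun k => hj0 _
  have hzd : ∀ k, z k ∈ unitDisk := fun k => hzs _
  have hc : ∀ k, ‖c k‖ = 1 := by
    intro k
    simp only [c]
    split_ifs
    · exact Complex.norm_exp_ofReal_mul_I θ
    · exact norm_one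
  have hq : ∀ x ∈ unitDisk, ∃ q : ℝ, 0 < q ∧ q < 1 ∧ ∀ k, ‖mobius (z k) x‖ ≤ q := by
    intro x hx
    rw [unitDisk_iff] at hx
    obtain ⟨q, h0, h1, h⟩ := mobius_bound r ‖x‖ hr0 hr1 (norm_nonneg _) hx
    exact ⟨q, h0, h1, fun k => h _ _ (hz k) le_rfl⟩
  have hlim : ∀ x ∈ unitDisk,
      Tendsto (fun N => ∏ k ∈ Finset.range N, c k * mobius (z k) x) atTop (𝓝 0) := by
    intro x hx
    obtain ⟨q, h0, h1, h⟩ := hq x hx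
    exact squeeze_zero_norm (prod_norm_le z c hc x q h)
      (tendsto_pow_atTop_nhds_zero_of_lt_one h0.le h1)
  have hBprod : ∀ x, ∏ k ∈ Finset.range m, c k * mobius (z k) x = B x := by
    intro x
    rw [hBz, Finset.prod_mul_distrib]
    congr 1
    · rw [Finset.prod_eq_single 0]
      · simp [c]
      · intro k hk hk0
        rw [Finset.mem_range] at hk
        simp [c, Nat.mod_eq_of_lt hk, hk0]
      · intro h
        exact absurd (Finset.mem_range.2 hm) h
    · rw [Finset.prod_range]
      refine Finset.prod_congr rfl fun j _ => ?_
      have : z j = zs j := by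
        simp only [z]
        congr 1
        exact Fin.ext (Nat.mod_eq_of_lt j.2)
      rw [this]
  have hBd : ∀ x ∈ unitDisk, B x ∈ unitDisk := by
    intro x hx
    obtain ⟨q, h0, h1, h⟩ := hq x hx
    rw [unitDisk_iff, ← hBprod]
    exact (prod_norm_le z c hc x q h m).trans_lt (pow_lt_one₀ h0.le h1 hm.ne')
  obtain ⟨e, d, heo, hec, her⟩ := exists_basis z c hzd hc hlim
  obtain ⟨A, hA, hadj, hsum⟩ := exists_isoms m hm e heo hec
  refine assemble (betaSeq w) (goodWeight_betaSeq w hw) m B hBd A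
    (fun i x => ratF z c i (d (z i)) (z i) x) ?_ ?_ hadj hsum
  · intro i
    refine basis_farDecay m hm z c r hr0 hr1 hz hc e d (∑ j, ‖d (zs j)‖) ?_ her i i.2 (A i) (hA i)
    intro k
    exact Finset.single_le_sum (f := fun j => ‖d (zs j)‖) (fun _ _ => norm_nonneg _)
      (Finset.mem_univ (⟨k % m, Nat.mod_lt _ hm⟩ : Fin m))
  · intro i n x hx
    rw [hA, her _ x hx, prod_period m _ ?_ n i, hBprod]
    · have : z (n * m + i) = z i := by
        simp only [z, Nat.mul_add_mod_self_right]
      rw [this]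
      unfold ratF
      ring
    · intro k
      simp only [z, c, Nat.add_mod_left]
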